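/- Let G be a finite connected simple graph with vertex set V and edge set E, and let G_1, …, G_k be connected subgraphs of G, with vertex sets V_j and edge sets E_j, such that the V_j are pairwise disjoint, |V_j| ≥ 2 for each j, and V = V_1 ∪ ⋯ ∪ V_k. Set 𝐄 = E_1 ∪ ⋯ ∪ E_k, and let v ∈ Δ_E be a vector with v_e = 0 for every e ∈ E ∖ 𝐄. Then: (1) v is an equilibrium for the WARM on G if and only if, for every j, the rescaled vector (|V|/|V_j|)·(v_e)_{e ∈ E_j} is an equilibrium for the WARM on G_j; and (2) v is a linearly stable equilibrium for the WARM on G if and only if, for every j, (|V|/|V_j|)·(v_e)_{e ∈ E_j} is a linearly stable equilibrium for the WARM on G_j. -/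

import Mathlib

open Finset

noncomputable section

/-- Membership in the simplex `Δ`. -/
def InSimplex {ι : Type*} [Fintype ι] (v : ι → ℝ) : Prop :=
  (∀ i, 0 ≤ v i) ∧ ∑ i, v i = 1

/-- A WARM weight: a probability distribution on the subsets of the colour set,
giving no mass to the empty set. -/
def IsWarmWeight {ι : Type*} [Fintype ι] [DecidableEq ι] (p : Finset ι → ℝ) : Prop :=
  p ∅ = 0 ∧ (∀ A, 0 ≤ p A ∧ p A ≤ 1) ∧ ∑ A : Finset ι, p A = 1

/-- The WARM vector field `F`. -/
def warmF {ι : Type*} [Fintype ι] [DecidableEq ι] (α : ℝ) (p : Finset ι → ℝ)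
    (v : ι → ℝ) (i : ι) : ℝ :=
  -v i + ∑ A ∈ Finset.univ.filter (fun A : Finset ι => i ∈ A),
      p A * v i ^ α / (∑ j ∈ A, v j ^ α)

/-- The Jacobian matrix `D(v)`. -/
def warmD {ι : Type*} [Fintype ι] [DecidableEq ι] (α : ℝ) (p : Finset ι → ℝ)
    (v : ι → ℝ) : Matrix ι ι ℝ :=
  Matrix.of fun i k =>
    if i = k then
      -1 + α * v i ^ (α - 1) *
        ∑ A ∈ Finset.univ.filter (fun A : Finset ι => i ∈ A),
          p A * ((∑ j ∈ A, v j ^ α) - v i ^ α) / (∑ j ∈ A, v j ^ α) ^ 2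
    else
      -(α * v k ^ (α - 1) * v i ^ α *
        ∑ A ∈ Finset.univ.filter (fun A : Finset ι => i ∈ A ∧ k ∈ A),
          p A / (∑ j ∈ A, v j ^ α) ^ 2)

/-- `μ ∈ ℂ` is an eigenvalue of the real matrix `M`, i.e. a root of its
characteristic polynomial. -/
def IsEigenvalue {ι : Type*} [Fintype ι] [DecidableEq ι] (M : Matrix ι ι ℝ) (μ : ℂ) : Prop :=
  (M.charpoly.map (algebraMap ℝ ℂ)).IsRoot μ

/-- Linear stability: every complex eigenvalue has negative real part. -/
def LinStable {ι : Type*} [Fintype ι] [DecidableEq ι] (M : Matrix ι ι ℝ) : Prop :=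
  ∀ μ : ℂ, IsEigenvalue M μ → μ.re < 0

/-- Linear instability: some eigenvalue has positive real part. -/
def LinUnstable {ι : Type*} [Fintype ι] [DecidableEq ι] (M : Matrix ι ι ℝ) : Prop :=
  ∃ μ : ℂ, IsEigenvalue M μ ∧ 0 < μ.re

/-- Critical: neither linearly stable nor linearly unstable. -/
def CriticalPt {ι : Type*} [Fintype ι] [DecidableEq ι] (M : Matrix ι ι ℝ) : Prop :=
  ¬ LinStable M ∧ ¬ LinUnstable M


/-- The WARM weight of a graph `G` with designated vertex set `S`: each vertex `x ∈ S`
contributes mass `1/|S|` to the set of edges of `G` incident to `x`. -/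
def graphWarmP {W : Type*} [Fintype W] [DecidableEq W] (S : Finset W)
    (G : SimpleGraph W) [DecidableRel G.Adj] (A : Finset G.edgeSet) : ℝ :=
  ((S.filter (fun x =>
      A = Finset.univ.filter (fun e : G.edgeSet => x ∈ (e : Sym2 W)))).card : ℝ) /
    (S.card : ℝ)

/-!
Write `T_x = ∑_{e ∋ x} v_e ^ α`. Since `v` vanishes off the `G_j`, for `x ∈ V_j` the sum `T_x` only
sees edges of `G_j`. Rescaling `v` by `c = |V|/|V_j|` multiplies `T_x` by `c ^ α`, and together with
the change of the vertex weights from `1/|V|` to `1/|V_j|` this multiplies `F` by `c` and leaves the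
Jacobian unchanged. Edges `e` with `v_e = 0` satisfy `F(v)_e = 0`, and since `α > 1` their rows and
columns in `D(v)` agree with those of `-1`. Edges of distinct `G_j` share no vertex, so `D(v)` is
block diagonal with the Jacobians of the `G_j` and an identity block times `-1`.
-/

section BlockSpectrum

open Function

variable {ι κ : Type*}

/-- The block to which an index belongs when disjoint blocks are the ranges of the maps `φ j`;
indices lying in no block are labelled `none`. -/
def blockLabel {E : κ → Type*} (φ : ∀ j, E j → ι) : ι → Option κ :=
  extend (fun p : Σ j, E j => φ p.1 p.2) (fun p => some p.1) fun _ => none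

theorem blockLabel_eq_some_iff {E : κ → Type*} {φ : ∀ j, E j → ι}
    (hφ : Injective fun p : Σ j, E j => φ p.1 p.2) {i : ι} {j : κ} :
    blockLabel φ i = some j ↔ i ∈ Set.range (φ j) := by
  have blockLabel_apply (j : κ) (a : E j) : blockLabel φ (φ j a) = some j :=
    hφ.extend_apply _ _ ⟨j, a⟩
  refine ⟨fun hi => ?_, fun ⟨a, ha⟩ => ha ▸ blockLabel_apply j a⟩
  by_cases hrange : ∃ p : Σ j, E j, φ p.1 p.2 = i
  · obtain ⟨⟨j', a⟩, rfl⟩ := hrange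
    obtain rfl : j' = j := by simpa [blockLabel_apply] using hi
    exact ⟨a, rfl⟩
  · simp [blockLabel, extend_apply' _ _ _ hrange] at hi

variable [Fintype ι] [DecidableEq ι]

theorem isEigenvalue_iff_exists_toSquareBlock [LinearOrder κ] {M : Matrix ι ι ℝ} {b : ι → κ}
    (hM : M.BlockTriangular b) (μ : ℂ) :
    IsEigenvalue M μ ↔ ∃ a, IsEigenvalue (M.toSquareBlock b a) μ := by
  simp only [IsEigenvalue, Polynomial.IsRoot.def, hM.charpoly, Polynomial.map_prod,
    Polynomial.eval_prod, Finset.prod_eq_zero_iff]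
  refine ⟨fun ⟨a, _, ha⟩ => ⟨a, ha⟩, fun ⟨a, ha⟩ => ⟨a, ?_, ha⟩⟩
  by_contra hempty
  have : IsEmpty {i // b i = a} :=
    ⟨fun i => hempty (Finset.mem_image.2 ⟨i, Finset.mem_univ _, i.2⟩)⟩
  simp [Matrix.charpoly_isEmpty] at ha

theorem linStable_iff_forall_toSquareBlock [LinearOrder κ] {M : Matrix ι ι ℝ} {b : ι → κ}
    (hM : M.BlockTriangular b) :
    LinStable M ↔ ∀ a, LinStable (M.toSquareBlock b a) := by
  simp only [LinStable, isEigenvalue_iff_exists_toSquareBlock hM, forall_exists_index]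
  exact forall_comm

theorem linStable_submatrix_equiv [Fintype κ] [DecidableEq κ] (M : Matrix ι ι ℝ) (e : κ ≃ ι) :
    LinStable (M.submatrix e e) ↔ LinStable M := by
  have hcharpoly : (M.submatrix e e).charpoly = M.charpoly := M.charpoly_reindex e.symm
  simp only [LinStable, IsEigenvalue, hcharpoly]

theorem linStable_neg_one : LinStable (-1 : Matrix ι ι ℝ) := by
  intro μ hμ
  have hcharpoly : (-1 : Matrix ι ι ℝ).charpoly = (Polynomial.X + 1) ^ Fintype.card ι := by
    simpa [← Matrix.diagonal_neg] using Matrix.charpoly_diagonal (fun _ : ι => (-1 : ℝ))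
  have hroot : μ + 1 = 0 := by
    rw [IsEigenvalue, hcharpoly] at hμ
    simpa using eq_zero_of_pow_eq_zero (by simpa using hμ)
  simp [eq_neg_of_add_eq_zero_left hroot]

theorem linStable_iff_forall_submatrix {E : κ → Type*} [∀ j, Fintype (E j)]
    [∀ j, DecidableEq (E j)] {M : Matrix ι ι ℝ} {φ : ∀ j, E j → ι}
    (hφ : Injective fun p : Σ j, E j => φ p.1 p.2)
    (hM : ∀ i k, M i k ≠ (-1 : Matrix ι ι ℝ) i k →
      ∃ j, i ∈ Set.range (φ j) ∧ k ∈ Set.range (φ j)) :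
    LinStable M ↔ ∀ j, LinStable (M.submatrix (φ j) (φ j)) := by
  -- The blocks carry no order; any one will do, as `M` is block diagonal.
  obtain ⟨_, -⟩ := exists_wellFoundedLT (α := Option κ)
  have htriangular : M.BlockTriangular (blockLabel φ) := by
    intro i k hik
    by_contra hne
    have hik' : i ≠ k := by rintro rfl; exact hik.false
    obtain ⟨j, hi, hk⟩ := hM i k (by simpa [Matrix.one_apply_ne hik'] using hne)
    rw [(blockLabel_eq_some_iff hφ).2 hi, (blockLabel_eq_some_iff hφ).2 hk] at hik
    exact hik.false
  have hnone : M.toSquareBlock (blockLabel φ) none = -1 := by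
    ext i k
    by_contra hne
    have hne' : M i k ≠ (-1 : Matrix ι ι ℝ) i k := by
      simpa [Matrix.toSquareBlock_def, Matrix.one_apply, Subtype.ext_iff] using hne
    obtain ⟨j, hi, -⟩ := hM i k hne'
    exact Option.some_ne_none j (((blockLabel_eq_some_iff hφ).2 hi).symm.trans i.2)
  have hsome (j : κ) : LinStable (M.toSquareBlock (blockLabel φ) (some j)) ↔
      LinStable (M.submatrix (φ j) (φ j)) := by
    let e : E j ≃ {i // blockLabel φ i = some j} :=
      Equiv.ofBijective (fun a => ⟨φ j a, (blockLabel_eq_some_iff hφ).2 ⟨a, rfl⟩⟩)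
        ⟨fun a c hac => by simpa using hφ (a₁ := ⟨j, a⟩) (a₂ := ⟨j, c⟩) (congrArg Subtype.val hac),
          fun i => ((blockLabel_eq_some_iff hφ).1 i.2).imp fun _ => Subtype.ext⟩
    exact (linStable_submatrix_equiv _ e).symm
  rw [linStable_iff_forall_toSquareBlock htriangular, Option.forall, hnone]
  simp only [hsome, linStable_neg_one, true_and]

end BlockSpectrum

section Weight

variable {ι : Type*} [Fintype ι] [DecidableEq ι] {α : ℝ} (p : Finset ι → ℝ) {v : ι → ℝ} {i k : ι}

theorem warmF_eq_zero_of_apply_eq_zero (hα : α ≠ 0) (hi : v i = 0) : warmF α p v i = 0 := by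
  simp [warmF, hi, Real.zero_rpow hα]

-- The Kronecker delta `(1 : Matrix ι ι ℝ) i k` puts the two cases of `warmD` into one formula.
theorem warmD_apply (α : ℝ) (v : ι → ℝ) (i k : ι) :
    warmD α p v i k = (-1 : Matrix ι ι ℝ) i k + α * v k ^ (α - 1) *
      ∑ A with i ∈ A ∧ k ∈ A,
        p A * (((1 : Matrix ι ι ℝ) i k * ∑ j ∈ A, v j ^ α - v i ^ α) /
          (∑ j ∈ A, v j ^ α) ^ 2) := by
  obtain rfl | hik := eq_or_ne i k
  · simp [warmD, mul_div_assoc]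
  · simp only [warmD, Matrix.of_apply, if_neg hik, Matrix.neg_apply, Matrix.one_apply_ne hik,
      neg_zero, zero_add, zero_mul, zero_sub]
    rw [mul_assoc _ (v i ^ α), ← mul_neg, Finset.mul_sum, ← Finset.sum_neg_distrib]
    exact congrArg _ (Finset.sum_congr rfl fun A _ => by ring)

theorem warmD_apply_of_apply_left_eq_zero (hα : 1 < α) (hi : v i = 0) :
    warmD α p v i k = (-1 : Matrix ι ι ℝ) i k := by
  rw [warmD_apply]
  obtain rfl | hik := eq_or_ne i k
  · simp [hi, Real.zero_rpow (sub_ne_zero.2 hα.ne')]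
  · simp [hi, Matrix.one_apply_ne hik, Real.zero_rpow (zero_lt_one.trans hα).ne']

theorem warmD_apply_of_apply_right_eq_zero (hα : α ≠ 1) (hk : v k = 0) :
    warmD α p v i k = (-1 : Matrix ι ι ℝ) i k := by
  simp [warmD_apply, hk, Real.zero_rpow (sub_ne_zero.2 hα)]

end Weight

section GraphWeight

variable {V : Type*} [Fintype V] [DecidableEq V] (S : Finset V) (G : SimpleGraph V)
  [DecidableRel G.Adj]

/-- The star of a vertex `x`: the edges of `G` incident to `x`, as colours of the WARM on `G`.
In contrast to `SimpleGraph.incidenceFinset`, its elements have type `G.edgeSet`. -/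
def edgeStar (x : V) : Finset G.edgeSet := {e | x ∈ (e : Sym2 V)}

/-- The total weight `∑ v_e ^ α` of the edges incident to `x`. -/
def starSum (α : ℝ) (v : G.edgeSet → ℝ) (x : V) : ℝ := ∑ e ∈ edgeStar G x, v e ^ α

variable {G} in
theorem mem_edgeStar {x : V} {e : G.edgeSet} : e ∈ edgeStar G x ↔ x ∈ (e : Sym2 V) := by
  simp [edgeStar]

theorem sum_graphWarmP_mul (P : Finset G.edgeSet → Prop) [DecidablePred P]
    (f : Finset G.edgeSet → ℝ) :
    ∑ A with P A, graphWarmP S G A * f A =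
      (∑ x ∈ S with P (edgeStar G x), f (edgeStar G x)) / #S := by
  have hterm (A : Finset G.edgeSet) :
      graphWarmP S G A * f A = (∑ x ∈ S, if A = edgeStar G x then f A else 0) / #S := by
    rw [← Finset.sum_filter, Finset.sum_const, nsmul_eq_mul, mul_div_right_comm]
    rfl
  simp only [hterm, ← Finset.sum_div]
  rw [Finset.sum_comm, Finset.sum_filter]
  simp [Finset.sum_ite_eq']

theorem warmF_graphWarmP (α : ℝ) (v : G.edgeSet → ℝ) (e : G.edgeSet) :
    warmF α (graphWarmP S G) v e =
      -v e + (∑ x ∈ S with x ∈ (e : Sym2 V), v e ^ α / starSum G α v x) / #S := by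
  simp only [warmF, mul_div_assoc]
  rw [sum_graphWarmP_mul S G (e ∈ ·) fun A => v e ^ α / ∑ j ∈ A, v j ^ α]
  simp only [mem_edgeStar, starSum]

theorem warmD_graphWarmP_apply (α : ℝ) (v : G.edgeSet → ℝ) (e f : G.edgeSet) :
    warmD α (graphWarmP S G) v e f = (-1 : Matrix G.edgeSet G.edgeSet ℝ) e f +
      α * v f ^ (α - 1) * ((∑ x ∈ S with x ∈ (e : Sym2 V) ∧ x ∈ (f : Sym2 V),
        ((1 : Matrix G.edgeSet G.edgeSet ℝ) e f * starSum G α v x - v e ^ α) /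
          starSum G α v x ^ 2) / #S) := by
  rw [warmD_apply, sum_graphWarmP_mul S G (fun A => e ∈ A ∧ f ∈ A) fun A =>
    ((1 : Matrix G.edgeSet G.edgeSet ℝ) e f * ∑ j ∈ A, v j ^ α - v e ^ α) /
      (∑ j ∈ A, v j ^ α) ^ 2]
  simp only [mem_edgeStar, starSum]

variable {S G} in
theorem apply_ne_zero_and_exists_common_vertex_of_warmD_ne {α : ℝ} (hα : 1 < α)
    {v : G.edgeSet → ℝ} {e f : G.edgeSet}
    (hne : warmD α (graphWarmP S G) v e f ≠ (-1 : Matrix G.edgeSet G.edgeSet ℝ) e f) :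
    v e ≠ 0 ∧ v f ≠ 0 ∧ ∃ x, x ∈ (e : Sym2 V) ∧ x ∈ (f : Sym2 V) := by
  refine ⟨fun he => hne (warmD_apply_of_apply_left_eq_zero _ hα he),
    fun hf => hne (warmD_apply_of_apply_right_eq_zero _ hα.ne' hf), ?_⟩
  by_contra! hdisj
  have hempty : {x ∈ S | x ∈ (e : Sym2 V) ∧ x ∈ (f : Sym2 V)} = ∅ :=
    Finset.filter_eq_empty_iff.2 fun x _ hx => hdisj x hx.1 hx.2
  exact hne (by simp [warmD_graphWarmP_apply, hempty])

end GraphWeight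

section Subgraph

open Function

variable {V : Type*} {G H : SimpleGraph V}

theorem mem_of_mem_edgeSet_of_support_subset {S : Set V} (hS : H.support ⊆ S)
    {e : Sym2 V} (he : e ∈ H.edgeSet) {x : V} (hx : x ∈ e) : x ∈ S := by
  obtain ⟨y, rfl⟩ := hx
  exact hS (SimpleGraph.Adj.mem_support_left he)

theorem apply_eq_zero_of_notMem_edgeSet {ι : Type*} {Gs : ι → SimpleGraph V}
    {Vs : ι → Finset V} {v : G.edgeSet → ℝ}
    (hsupp : ∀ j, (Gs j).support ⊆ Vs j) (hdisj : Pairwise (Disjoint on Vs))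
    (hzero : ∀ e : G.edgeSet, (∀ j, (e : Sym2 V) ∉ (Gs j).edgeSet) → v e = 0)
    {j : ι} {x : V} (hx : x ∈ Vs j) (e : G.edgeSet) (hxe : x ∈ (e : Sym2 V))
    (he : (e : Sym2 V) ∉ (Gs j).edgeSet) : v e = 0 := by
  refine hzero e fun j' he' => he ?_
  have hx' : x ∈ Vs j' := mem_of_mem_edgeSet_of_support_subset (hsupp j') he' hxe
  obtain rfl : j = j' := hdisj.eq (Finset.not_disjoint_iff.2 ⟨x, hx, hx'⟩)
  exact he'

/-- The inclusion of the edges of a subgraph into those of the ambient graph. -/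
abbrev edgeInclusion (hle : H ≤ G) : H.edgeSet → G.edgeSet :=
  Set.inclusion (SimpleGraph.edgeSet_mono hle)

/-- The vector `(|V|/|S|)·(v_e)_{e ∈ E(H)}` on the edges of a subgraph `H` of `G`, where `S` is
the vertex set of `H`. The subgraph is encoded as a graph on all of `V`, so `S` is a separate
argument. -/
def rescaledRestriction [Fintype V] (hle : H ≤ G) (S : Finset V) (v : G.edgeSet → ℝ)
    (e : H.edgeSet) : ℝ :=
  (Fintype.card V : ℝ) / (#S : ℝ) * v (edgeInclusion hle e)

theorem edgeInclusion_sigma_injective {ι : Type*} {Gs : ι → SimpleGraph V} (hle : ∀ j, Gs j ≤ G)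
    {Vs : ι → Finset V} (hsupp : ∀ j, (Gs j).support ⊆ Vs j) (hdisj : Pairwise (Disjoint on Vs)) :
    Injective fun p : Σ j, (Gs j).edgeSet => edgeInclusion (hle p.1) p.2 := by
  rintro ⟨j, e, he⟩ ⟨j', e', he'⟩ heq
  obtain rfl : e = e' := congrArg Subtype.val heq
  induction e with | _ x y =>
  obtain rfl : j = j' := hdisj.eq (Finset.not_disjoint_iff.2
    ⟨x, mem_of_mem_edgeSet_of_support_subset (hsupp j) he (Sym2.mem_mk_left x y),
      mem_of_mem_edgeSet_of_support_subset (hsupp j') he' (Sym2.mem_mk_left x y)⟩)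
  rfl

variable [Fintype V] {α : ℝ} {v : G.edgeSet → ℝ} {S : Finset V}

theorem rescaledRestriction_rpow (hle : H ≤ G) (hv : ∀ e, 0 ≤ v e) (e : H.edgeSet) (β : ℝ) :
    rescaledRestriction hle S v e ^ β =
      ((Fintype.card V : ℝ) / (#S : ℝ)) ^ β * v (edgeInclusion hle e) ^ β :=
  Real.mul_rpow (by positivity) (hv _)

variable [DecidableEq V] [DecidableRel G.Adj] [DecidableRel H.Adj]

theorem starSum_rescaledRestriction (hle : H ≤ G) (hα : α ≠ 0) (hv : ∀ e, 0 ≤ v e) {x : V}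
    (hzero : ∀ e : G.edgeSet, x ∈ (e : Sym2 V) → (e : Sym2 V) ∉ H.edgeSet → v e = 0) :
    starSum H α (rescaledRestriction hle S v) x =
      ((Fintype.card V : ℝ) / (#S : ℝ)) ^ α * starSum G α v x := by
  rw [starSum, starSum, Finset.mul_sum]
  refine Finset.sum_of_injOn (edgeInclusion hle) (Set.inclusion_injective _).injOn ?_ ?_
    fun e _ => rescaledRestriction_rpow hle hv e α
  · intro e he
    simpa [mem_edgeStar] using he
  · intro e he hrange
    have heH : (e : Sym2 V) ∉ H.edgeSet := fun heH =>
      hrange ⟨⟨e, heH⟩, mem_edgeStar.2 (mem_edgeStar (G := G).1 he), rfl⟩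
    rw [hzero e (mem_edgeStar.1 he) heH, Real.zero_rpow hα, mul_zero]

theorem warmF_rescaledRestriction (hle : H ≤ G) (hα : α ≠ 0) (hv : ∀ e, 0 ≤ v e)
    (hS : S.Nonempty) (hsupp : H.support ⊆ S)
    (hzero : ∀ x ∈ S, ∀ e : G.edgeSet, x ∈ (e : Sym2 V) → (e : Sym2 V) ∉ H.edgeSet → v e = 0)
    (e : H.edgeSet) :
    warmF α (graphWarmP S H) (rescaledRestriction hle S v) e =
      (Fintype.card V : ℝ) / (#S : ℝ) *
        warmF α (graphWarmP univ G) v (edgeInclusion hle e) := by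
  have : Nonempty V := hS.to_type
  have : 0 < #S := hS.card_pos
  have hsum : ∑ x ∈ S with x ∈ (e : Sym2 V), rescaledRestriction hle S v e ^ α /
        starSum H α (rescaledRestriction hle S v) x =
      ∑ x with x ∈ (e : Sym2 V), v (edgeInclusion hle e) ^ α / starSum G α v x := by
    refine Finset.sum_congr ?_ fun x hx => ?_
    · ext x
      simpa using mem_of_mem_edgeSet_of_support_subset hsupp e.2
    · rw [starSum_rescaledRestriction hle hα hv (hzero x ?_), rescaledRestriction_rpow hle hv,
        mul_div_mul_left _ _ (by positivity)]
      exact mem_of_mem_edgeSet_of_support_subset hsupp e.2 (Finset.mem_filter.1 hx).2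
  rw [warmF_graphWarmP, warmF_graphWarmP, hsum, rescaledRestriction, Finset.card_univ]
  field_simp

theorem warmD_rescaledRestriction_apply (hle : H ≤ G) (hα : α ≠ 0) (hv : ∀ e, 0 ≤ v e)
    (hS : S.Nonempty) (hsupp : H.support ⊆ S)
    (hzero : ∀ x ∈ S, ∀ e : G.edgeSet, x ∈ (e : Sym2 V) → (e : Sym2 V) ∉ H.edgeSet → v e = 0)
    (e f : H.edgeSet) :
    warmD α (graphWarmP S H) (rescaledRestriction hle S v) e f =
      warmD α (graphWarmP univ G) v (edgeInclusion hle e) (edgeInclusion hle f) := by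
  have : Nonempty V := hS.to_type
  have : 0 < #S := hS.card_pos
  have hone : (1 : Matrix G.edgeSet G.edgeSet ℝ) (edgeInclusion hle e) (edgeInclusion hle f) =
      (1 : Matrix H.edgeSet H.edgeSet ℝ) e f := by
    simp only [Matrix.one_apply, (Set.inclusion_injective _).eq_iff]
  have hsum : ∑ x ∈ S with x ∈ (e : Sym2 V) ∧ x ∈ (f : Sym2 V),
        ((1 : Matrix H.edgeSet H.edgeSet ℝ) e f * starSum H α (rescaledRestriction hle S v) x -
          rescaledRestriction hle S v e ^ α) / starSum H α (rescaledRestriction hle S v) x ^ 2 =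
      (((Fintype.card V : ℝ) / (#S : ℝ)) ^ α)⁻¹ *
        ∑ x with x ∈ (e : Sym2 V) ∧ x ∈ (f : Sym2 V),
          ((1 : Matrix H.edgeSet H.edgeSet ℝ) e f * starSum G α v x -
            v (edgeInclusion hle e) ^ α) / starSum G α v x ^ 2 := by
    rw [Finset.mul_sum]
    refine Finset.sum_congr ?_ fun x hx => ?_
    · ext x
      simpa using fun hxe _ => mem_of_mem_edgeSet_of_support_subset hsupp e.2 hxe
    · have hxS : x ∈ S :=
        mem_of_mem_edgeSet_of_support_subset hsupp e.2 (Finset.mem_filter.1 hx).2.1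
      rw [starSum_rescaledRestriction hle hα hv (hzero x hxS), rescaledRestriction_rpow hle hv]
      field_simp
  rw [warmD_graphWarmP_apply, warmD_graphWarmP_apply, hsum, rescaledRestriction_rpow hle hv,
    Real.rpow_sub_one (by positivity), Matrix.neg_apply, Matrix.neg_apply, hone, Finset.card_univ]
  field_simp

end Subgraph

section Decomposition

open Function

variable {V ι : Type*} [Fintype V] [DecidableEq V] {G : SimpleGraph V} [DecidableRel G.Adj]
  {Gs : ι → SimpleGraph V} [∀ j, DecidableRel (Gs j).Adj] {Vs : ι → Finset V} {α : ℝ}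
  {v : G.edgeSet → ℝ}

theorem forall_warmF_eq_zero_iff (hα : α ≠ 0) (hle : ∀ j, Gs j ≤ G)
    (hsupp : ∀ j, (Gs j).support ⊆ Vs j) (hne : ∀ j, (Vs j).Nonempty)
    (hdisj : Pairwise (Disjoint on Vs)) (hv : ∀ e, 0 ≤ v e)
    (hzero : ∀ e : G.edgeSet, (∀ j, (e : Sym2 V) ∉ (Gs j).edgeSet) → v e = 0) :
    (∀ e, warmF α (graphWarmP univ G) v e = 0) ↔
      ∀ j e, warmF α (graphWarmP (Vs j) (Gs j)) (rescaledRestriction (hle j) (Vs j) v) e = 0 := by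
  have hblock (j : ι) (e : (Gs j).edgeSet) :
      warmF α (graphWarmP (Vs j) (Gs j)) (rescaledRestriction (hle j) (Vs j) v) e = 0 ↔
        warmF α (graphWarmP univ G) v (edgeInclusion (hle j) e) = 0 := by
    have : Nonempty V := (hne j).to_type
    rw [warmF_rescaledRestriction (hle j) hα hv (hne j) (hsupp j) fun x =>
      apply_eq_zero_of_notMem_edgeSet hsupp hdisj hzero]
    simp [(hne j).ne_empty]
  simp only [hblock]
  refine ⟨fun h j e => h _, fun h e => ?_⟩
  by_cases hlive : ∃ j, (e : Sym2 V) ∈ (Gs j).edgeSet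
  · obtain ⟨j, he⟩ := hlive
    exact h j ⟨e, he⟩
  · exact warmF_eq_zero_of_apply_eq_zero _ hα (hzero e (not_exists.1 hlive))

theorem linStable_warmD_iff (hα : 1 < α) (hle : ∀ j, Gs j ≤ G)
    (hsupp : ∀ j, (Gs j).support ⊆ Vs j) (hne : ∀ j, (Vs j).Nonempty)
    (hdisj : Pairwise (Disjoint on Vs)) (hv : ∀ e, 0 ≤ v e)
    (hzero : ∀ e : G.edgeSet, (∀ j, (e : Sym2 V) ∉ (Gs j).edgeSet) → v e = 0) :
    LinStable (warmD α (graphWarmP univ G) v) ↔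
      ∀ j, LinStable (warmD α (graphWarmP (Vs j) (Gs j))
        (rescaledRestriction (hle j) (Vs j) v)) := by
  have hblock (j : ι) :
      warmD α (graphWarmP (Vs j) (Gs j)) (rescaledRestriction (hle j) (Vs j) v) =
        (warmD α (graphWarmP univ G) v).submatrix (edgeInclusion (hle j))
          (edgeInclusion (hle j)) :=
    Matrix.ext <| warmD_rescaledRestriction_apply (hle j) (zero_lt_one.trans hα).ne' hv (hne j)
      (hsupp j) fun x => apply_eq_zero_of_notMem_edgeSet hsupp hdisj hzero
  simp only [hblock]
  refine linStable_iff_forall_submatrix (edgeInclusion_sigma_injective hle hsupp hdisj)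
    fun e f hef => ?_
  obtain ⟨he, hf, x, hxe, hxf⟩ := apply_ne_zero_and_exists_common_vertex_of_warmD_ne hα hef
  obtain ⟨j, hej⟩ : ∃ j, (e : Sym2 V) ∈ (Gs j).edgeSet := by
    by_contra! hdead
    exact he (hzero e hdead)
  have hxj : x ∈ Vs j := mem_of_mem_edgeSet_of_support_subset (hsupp j) hej hxe
  have hfj : (f : Sym2 V) ∈ (Gs j).edgeSet := by
    by_contra hfj
    exact hf (apply_eq_zero_of_notMem_edgeSet hsupp hdisj hzero hxj f hxf hfj)
  exact ⟨j, ⟨⟨e, hej⟩, rfl⟩, ⟨⟨f, hfj⟩, rfl⟩⟩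

theorem subgraph_stability_reduction_general (hα : 1 < α) (hle : ∀ j, Gs j ≤ G)
    (hsupp : ∀ j, (Gs j).support ⊆ Vs j) (hne : ∀ j, (Vs j).Nonempty)
    (hdisj : Pairwise (Disjoint on Vs)) (hv : InSimplex v)
    (hzero : ∀ e : G.edgeSet, (∀ j, (e : Sym2 V) ∉ (Gs j).edgeSet) → v e = 0) :
    ((∀ e, warmF α (graphWarmP univ G) v e = 0) ↔
      ∀ j e, warmF α (graphWarmP (Vs j) (Gs j)) (rescaledRestriction (hle j) (Vs j) v) e = 0) ∧
    (((∀ e, warmF α (graphWarmP univ G) v e = 0) ∧ LinStable (warmD α (graphWarmP univ G) v)) ↔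
      ∀ j, (∀ e, warmF α (graphWarmP (Vs j) (Gs j))
          (rescaledRestriction (hle j) (Vs j) v) e = 0) ∧
        LinStable (warmD α (graphWarmP (Vs j) (Gs j)) (rescaledRestriction (hle j) (Vs j) v))) := by
  have hequilibrium :=
    forall_warmF_eq_zero_iff (zero_lt_one.trans hα).ne' hle hsupp hne hdisj hv.1 hzero
  exact ⟨hequilibrium, by
    rw [hequilibrium, linStable_warmD_iff hα hle hsupp hne hdisj hv.1 hzero, forall_and]⟩

end Decomposition

/-- **Subgraph stability reduction.** Let `G` be a finite connected graph and let
`G₁,…,G_k` be connected subgraphs with pairwise disjoint vertex sets `V_j` of size at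
least `2` covering `V`.  A vector `v` vanishing outside `𝐄 = E₁ ∪ ⋯ ∪ E_k` is an
equilibrium (resp. a linearly stable equilibrium) of the WARM on `G` iff, for each `j`,
the rescaled restriction `(|V|/|V_j|)·(v_e)_{e ∈ E_j}` is an equilibrium (resp. a
linearly stable equilibrium) of the WARM on `G_j`. -/
theorem subgraph_stability_reduction
    {V : Type*} [Fintype V] [DecidableEq V]
    (G : SimpleGraph V) [DecidableRel G.Adj] (hG : G.Connected)
    (α : ℝ) (hα : 1 < α)
    (k : ℕ) (Gs : Fin k → SimpleGraph V) [∀ j, DecidableRel (Gs j).Adj]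
    (Vs : Fin k → Finset V)
    (hle : ∀ j, Gs j ≤ G)
    (hsupp : ∀ j, ∀ x y : V, (Gs j).Adj x y → x ∈ Vs j ∧ y ∈ Vs j)
    (hconn : ∀ j, ((Gs j).induce (↑(Vs j) : Set V)).Connected)
    (hcard : ∀ j, 2 ≤ (Vs j).card)
    (hdisj : ∀ j j', j ≠ j' → Disjoint (Vs j) (Vs j'))
    (hcover : ∀ x : V, ∃ j, x ∈ Vs j)
    (v : G.edgeSet → ℝ) (hv : InSimplex v)
    (hzero : ∀ e : G.edgeSet, (∀ j, (e : Sym2 V) ∉ (Gs j).edgeSet) → v e = 0) :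
    ((∀ i, warmF α (graphWarmP Finset.univ G) v i = 0) ↔
      ∀ j, ∀ i, warmF α (graphWarmP (Vs j) (Gs j))
        (fun e : (Gs j).edgeSet => (Fintype.card V : ℝ) / ((Vs j).card : ℝ) *
          v ⟨(e : Sym2 V), SimpleGraph.edgeSet_mono (hle j) e.2⟩) i = 0) ∧
    (((∀ i, warmF α (graphWarmP Finset.univ G) v i = 0) ∧
        LinStable (warmD α (graphWarmP Finset.univ G) v)) ↔
      ∀ j, ((∀ i, warmF α (graphWarmP (Vs j) (Gs j))
          (fun e : (Gs j).edgeSet => (Fintype.card V : ℝ) / ((Vs j).card : ℝ) *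
            v ⟨(e : Sym2 V), SimpleGraph.edgeSet_mono (hle j) e.2⟩) i = 0) ∧
        LinStable (warmD α (graphWarmP (Vs j) (Gs j))
          (fun e : (Gs j).edgeSet => (Fintype.card V : ℝ) / ((Vs j).card : ℝ) *
            v ⟨(e : Sym2 V), SimpleGraph.edgeSet_mono (hle j) e.2⟩)))) := by
  exact subgraph_stability_reduction_general hα hle (fun j x ⟨y, hxy⟩ => (hsupp j x y hxy).1)
    (fun j => Finset.card_pos.1 (two_pos.trans_le (hcard j))) (fun j j' => hdisj j j') hv hzero

end
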